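/- arXiv:1708.02719 — 5 statements merged into one kernel-verified Lean document; each statement's English description precedes it below -/
import Mathlib

section
/- Let Q be an atomless, countably closed partial order, let S ⊆ Q with |S| < 2^ℵ₀, and let p ∈ Q. Then there exists q ≤ p such that no r ∈ S satisfies r ≤ q. -/
/-!
Atomlessness yields a binary tree of elements below `p` in which the two children of every node are
incompatible. Two different branches split at some node, so no element lies below both of them, and
each element of `S` lies below at most one of the `2 ^ ℵ₀` branches. As `S` is smaller than
that, some branch has no element of `S` below it, and countable closure gives a lower bound `q` of
this branch; whatever lies below `q` lies below the branch.
-/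

open Cardinal

/-- Two elements of a partial order are incompatible if no element lies below both. -/
def Incompat {Q : Type} [PartialOrder Q] (p q : Q) : Prop := ¬ ∃ r, r ≤ p ∧ r ≤ q

open Set PiNat

universe u v

theorem incompat_iff_disjoint_Iic {Q : Type} [PartialOrder Q] {p q : Q} :
    Incompat p q ↔ Disjoint (Iic p) (Iic q) := by
  simp [Incompat, disjoint_left]

theorem exists_disjoint_iInter_res_of_mk_lt {α : Type u} {β : Type v} {A : List β → Set α}
    (hA : CantorScheme.Disjoint A) {S : Set α} (hS : lift.{v} #S < lift.{u} #(ℕ → β)) :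
    ∃ x : ℕ → β, Disjoint S (⋂ n, A (res x n)) := by
  by_contra! hmeet
  let B : List β → Set α := fun l => S ∩ A l
  have hB : CantorScheme.Disjoint B := fun l _ _ hbc =>
    (hA l hbc).mono inter_subset_right inter_subset_right
  have hdom (x : ℕ → β) : x ∈ (CantorScheme.inducedMap B).1 := by
    simpa only [B, CantorScheme.inducedMap, mem_ofPred_eq, ← inter_iInter,
      not_disjoint_iff_nonempty_inter] using hmeet x
  let f : (ℕ → β) → α := fun x => (CantorScheme.inducedMap B).2 ⟨x, hdom x⟩
  have hf_mem (x : ℕ → β) : f x ∈ S := (CantorScheme.map_mem ⟨x, hdom x⟩ 0).1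
  have hf : f.Injective := hB.map_injective.comp fun _ _ => congrArg Subtype.val
  exact hS.not_ge (lift_mk_le_lift_mk_of_injective (hf.codRestrict hf_mem))

section SplittingTree

variable {Q : Type u} {β : Type v} {split : Q → β → Q}

/-- The tree with root `p` in which the children of a node `q` are the elements `split q b`. As in
`PiNat.res` and `CantorScheme`, the list addressing a node has its most recent step at the head. -/
def splittingTree (split : Q → β → Q) (p : Q) : List β → Q
  | [] => p
  | b :: l => split (splittingTree split p l) b

variable [Preorder Q]

theorem antitone_splittingTree_res (hle : ∀ q b, split q b ≤ q) (p : Q) (x : ℕ → β) :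
    Antitone fun n => splittingTree split p (res x n) :=
  antitone_nat_of_succ_le fun _ => hle _ _

theorem disjoint_Iic_splittingTree
    (hdisj : ∀ q, Pairwise fun b c => Disjoint (Iic (split q b)) (Iic (split q c))) (p : Q) :
    CantorScheme.Disjoint fun l => Iic (splittingTree split p l) :=
  fun _ => hdisj _

theorem exists_le_disjoint_Iic_of_split (hle : ∀ q b, split q b ≤ q)
    (hdisj : ∀ q, Pairwise fun b c => Disjoint (Iic (split q b)) (Iic (split q c)))
    (hclosed : ∀ f : ℕ → Q, Antitone f → BddBelow (range f))
    {S : Set Q} (hS : lift.{v} #S < lift.{u} #(ℕ → β)) (p : Q) :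
    ∃ q ≤ p, Disjoint S (Iic q) := by
  obtain ⟨x, hx⟩ := exists_disjoint_iInter_res_of_mk_lt (disjoint_Iic_splittingTree hdisj p) hS
  obtain ⟨q, hq⟩ := hclosed _ (antitone_splittingTree_res hle p x)
  have hq_le (n : ℕ) : q ≤ splittingTree split p (res x n) := hq (mem_range_self n)
  exact ⟨q, hq_le 0, hx.mono_right (subset_iInter fun n => Iic_subset_Iic.2 (hq_le n))⟩

end SplittingTree

theorem avoid_small_set_below_general {Q : Type u} [Preorder Q]
    (hatomless : ∀ p : Q, ∃ q r, q ≤ p ∧ r ≤ p ∧ Disjoint (Iic q) (Iic r))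
    (hclosed : ∀ f : ℕ → Q, Antitone f → BddBelow (range f))
    {S : Set Q} (hS : #S < 𝔠) (p : Q) :
    ∃ q ≤ p, Disjoint S (Iic q) := by
  choose left right hleft hright hdisj using hatomless
  refine exists_le_disjoint_Iic_of_split (split := fun q b => cond b (left q) (right q))
    (fun q => Bool.forall_bool.2 ⟨hright q, hleft q⟩) (fun q => ?_) hclosed (by simpa using hS) p
  simp [Pairwise, hdisj q, (hdisj q).symm]

/-- If `Q` is an atomless countably closed partial order,
`S ⊆ Q` has size `< 2^ℵ₀`, and `p ∈ Q`, then there is `q ≤ p` with no element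
of `S` below `q`. -/
theorem avoid_small_set_below (Q : Type) [PartialOrder Q]
    (hatomless : ∀ p : Q, ∃ q r, q ≤ p ∧ r ≤ p ∧ Incompat q r)
    (hclosed : ∀ f : ℕ → Q, (∀ n, f (n + 1) ≤ f n) → ∃ q, ∀ n, q ≤ f n)
    (S : Set Q) (hS : #S < 2 ^ aleph0) (p : Q) :
    ∃ q ≤ p, ∀ r ∈ S, ¬ r ≤ q := by
  simp only [incompat_iff_disjoint_Iic] at hatomless
  simpa only [disjoint_left, mem_Iic] using avoid_small_set_below_general hatomless
    (fun f hf => (hclosed f fun n => hf n.le_succ).imp fun _ => forall_mem_range.2) hS p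
end

section
/- Let ⟨i_η : η ∈ 2^{<ω}⟩ be a family of countable ordinals such that i_ν < i_η whenever ν is a proper initial segment of η. Then there exist a countable limit ordinal δ and a function h : 2^{<ω} → 2^{<ω} such that: (i) for every m, all values h(η) for η of length m have the same length; (ii) for every η and every l ∈ {0,1}, h(η) is a proper initial segment of h(η⌢⟨l⟩); (iii) h(η⌢⟨0⟩) ≠ h(η⌢⟨1⟩) for every η; and (iv) for every x : ℕ → {0,1}, sup_{n<ω} i_{h(x↾n)} = δ. -/
open Cardinal

/-!
Write `x↾n` for the length-`n` initial segment of a branch `x`, and let `f x` be the supremum of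
`ia (x↾n)` over `n`. The values of `f` are suprema of subsets of the countable well-ordered set
`range ia`, and such a set has only countably many of them, so some fibre `f⁻¹ {δ}` is uncountable.
That fibre contains a nonempty set `W` without isolated points, and `h` is built inside the tree of
initial segments of members of `W`: each node is replaced by two extensions of it along different
members of `W`. Fixing `x₀ ∈ W`, the extensions of `s` are taken long enough for `ia` to be at least
`ia (x₀↾|s|)` on them; as there are finitely many nodes of each length, one length works for all of
them. The supremum along any new branch is then at least `f x₀ = δ`, and it is at most `δ` because
every node lies on a member of `W`.
-/

open Filter Set

section Countability

theorem countable_setOf_exists_subset_isLUB {α : Type*} [LinearOrder α] [WellFoundedLT α]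
    {A : Set α} (hA : A.Countable) : {u | ∃ B ⊆ A, IsLUB B u}.Countable := by
  set S := {u | ∃ B ⊆ A, IsLUB B u}
  have exists_mem_between {u v : α} (hv : v ∈ S) (huv : u < v) : ∃ a ∈ A, u < a ∧ a ≤ v := by
    obtain ⟨B, hBA, hB⟩ := hv
    obtain ⟨b, hbB, hub⟩ := (lt_isLUB_iff hB).1 huv
    exact ⟨b, hBA hbB, hub, hB.1 hbB⟩
  -- Apart from a possible largest one, each supremum is determined by the least element of `A`
  -- above it.
  let M := {u ∈ S | ∃ a ∈ A, u < a}
  have exists_least_above (u : M) : ∃ a ∈ A, u < a ∧ ∀ b ∈ A, u < b → a ≤ b := by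
    obtain ⟨a, ⟨haA, hua⟩, hmin⟩ :=
      (wellFounded_lt (α := α)).has_min {a ∈ A | u < a} u.2.2
    exact ⟨a, haA, hua, fun b hbA hub => not_lt.1 (hmin b ⟨hbA, hub⟩)⟩
  choose above above_mem lt_above above_le using exists_least_above
  have strictMono_above : StrictMono above := fun u v huv => by
    obtain ⟨a, haA, hua, hav⟩ := exists_mem_between v.2.1 huv
    exact (above_le u a haA hua).trans_lt (hav.trans_lt (lt_above v))
  have countable_M : M.Countable :=
    have := hA.to_subtype
    (strictMono_above.injective.codRestrict above_mem).countable
  have subsingleton_diff : (S \ M).Subsingleton := by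
    have le_of_mem {u v : α} (hu : u ∈ S \ M) (hv : v ∈ S \ M) : v ≤ u := by
      by_contra! huv
      obtain ⟨a, haA, hua, -⟩ := exists_mem_between hv.1 huv
      exact hu.2 ⟨hu.1, a, haA, hua⟩
    exact fun u hu v hv => (le_of_mem hv hu).antisymm (le_of_mem hu hv)
  exact (countable_M.union subsingleton_diff.countable).mono (sdiff_subset_iff.1 subset_rfl)

theorem exists_not_countable_fiber {α β : Type*} [Uncountable α] {f : α → β}
    (hf : (range f).Countable) : ∃ b, ¬ (f ⁻¹' {b}).Countable := by
  by_contra! hfib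
  refine not_countable_univ (α := α) ?_
  rw [← preimage_range f, ← biUnion_preimage_singleton]
  exact hf.biUnion fun b _ => hfib b

theorem exists_nonempty_preperfect_subset {X : Type*} [TopologicalSpace X]
    [SecondCountableTopology X] {U : Set X} (hU : ¬ U.Countable) :
    ∃ W ⊆ U, W.Nonempty ∧ Preperfect W := by
  have huniv : ¬ (univ : Set U).Countable := by rwa [countable_univ_iff, countable_coe_iff]
  obtain ⟨D, hD, hDne, -⟩ :=
    exists_perfect_nonempty_of_isClosed_of_not_countable isClosed_univ huniv
  refine ⟨(↑) '' D, Subtype.coe_image_subset U D, hDne.image _, ?_⟩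
  rintro _ ⟨x, hx, rfl⟩
  simpa using (hD.acc x hx).map continuous_subtype_val.continuousAt Subtype.val_injective

end Countability

theorem isSuccLimit_of_isLUB_range_of_strictMono {ι β : Type*} [Preorder ι] [NoMaxOrder ι]
    [Nonempty ι] [LinearOrder β] {f : ι → β} (hf : StrictMono f) {b : β}
    (hb : IsLUB (range f) b) : Order.IsSuccLimit b := by
  refine hb.isSuccLimit_of_notMem (range_nonempty f) ?_
  rintro ⟨i, rfl⟩
  obtain ⟨j, hij⟩ := exists_gt i
  exact (hf hij).not_ge (hb.1 (mem_range_self j))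

theorem exists_forall_comp_of_finite_fibers {ι κ β : Type*} {f : ι → κ}
    (hf : ∀ k, (f ⁻¹' {k}).Finite) {l : Filter β} [l.NeBot] {p : ι → β → Prop}
    (hp : ∀ i, ∀ᶠ b in l, p i b) : ∃ L : κ → β, ∀ i, p i (L (f i)) := by
  have (k : κ) : ∃ b, ∀ i ∈ f ⁻¹' {k}, p i b :=
    ((hf k).eventually_all.2 fun i _ => hp i).exists
  choose L hL using this
  exact ⟨L, fun i => hL (f i) i rfl⟩

section InitSeg

variable {α : Type*}

/-- The initial segment `x↾n` of an infinite sequence `x`, in the `List.ofFn` form used by the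
theorem. -/
def initSeg (x : ℕ → α) (n : ℕ) : List α := List.ofFn fun k : Fin n => x k

@[simp]
theorem length_initSeg (x : ℕ → α) (n : ℕ) : (initSeg x n).length = n := List.length_ofFn

theorem initSeg_succ (x : ℕ → α) (n : ℕ) : initSeg x (n + 1) = initSeg x n ++ [x n] :=
  List.ofFn_succ_last

theorem initSeg_prefix (x : ℕ → α) {m n : ℕ} (hmn : m ≤ n) : initSeg x m <+: initSeg x n := by
  have := List.take_prefix m (initSeg x n)
  rwa [initSeg, ← Fin.ofFn_take_eq_take_ofFn hmn] at this

theorem initSeg_eq_iff_mem_cylinder {x y : ℕ → α} {n : ℕ} :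
    initSeg y n = initSeg x n ↔ y ∈ PiNat.cylinder x n := by
  simp [initSeg, List.ofFn_inj, funext_iff, Fin.forall_iff, PiNat.mem_cylinder_iff]

theorem eventually_initSeg_ne {x y : ℕ → α} (hxy : x ≠ y) :
    ∀ᶠ n in atTop, initSeg x n ≠ initSeg y n := by
  obtain ⟨k, hk⟩ := Function.ne_iff.1 hxy
  filter_upwards [eventually_gt_atTop k] with n hkn heq
  exact hk (initSeg_eq_iff_mem_cylinder.1 heq k hkn)

/-- The tree of a set `W` of infinite sequences: all finite initial segments of members of `W`. -/
def nodes (W : Set (ℕ → α)) : Set (List α) := {s | ∃ x ∈ W, ∃ n, initSeg x n = s}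

theorem initSeg_mem_nodes {W : Set (ℕ → α)} {x : ℕ → α} (hx : x ∈ W) (n : ℕ) :
    initSeg x n ∈ nodes W :=
  ⟨x, hx, n, rfl⟩

theorem exists_ne_initSeg_eq_of_preperfect [TopologicalSpace α] [DiscreteTopology α]
    {W : Set (ℕ → α)} (hW : Preperfect W) {x : ℕ → α} (hx : x ∈ W) (n : ℕ) :
    ∃ y ∈ W, y ≠ x ∧ initSeg y n = initSeg x n := by
  have hcyl : PiNat.cylinder x n ∈ nhds x :=
    (PiNat.isOpen_cylinder _ x n).mem_nhds (PiNat.self_mem_cylinder x n)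
  obtain ⟨y, ⟨hyx, hyW⟩, hne⟩ := preperfect_iff_nhds.1 hW x hx _ hcyl
  exact ⟨y, hyW, hne, initSeg_eq_iff_mem_cylinder.2 hyx⟩

theorem strictMono_comp_initSeg {β : Type*} [Preorder β] {ia : List α → β}
    (hmono : ∀ ν η : List α, ν <+: η → ν ≠ η → ia ν < ia η) (x : ℕ → α) :
    StrictMono fun n => ia (initSeg x n) :=
  strictMono_nat_of_lt_succ fun n =>
    hmono _ _ (initSeg_prefix x n.le_succ) (ne_of_apply_ne List.length (by simp))

end InitSeg

section PerfectEmbedding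

/-- An embedding of `2^{<ω}` into itself whose image generates a perfect subtree: it maps levels
into levels, respects proper extension, and sends the two successors of a node to different
nodes. -/
structure IsPerfectEmbedding (h : List Bool → List Bool) : Prop where
  length_eq : ∀ ⦃η η' : List Bool⦄, η.length = η'.length → (h η).length = (h η').length
  prefix_append : ∀ (η : List Bool) (l : Bool), h η <+: h (η ++ [l])
  ne_append : ∀ (η : List Bool) (l : Bool), h η ≠ h (η ++ [l])
  append_false_ne_append_true : ∀ η : List Bool, h (η ++ [false]) ≠ h (η ++ [true])

theorem IsPerfectEmbedding.le_length_initSeg {h : List Bool → List Bool}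
    (hh : IsPerfectEmbedding h) (x : ℕ → Bool) (n : ℕ) : n ≤ (h (initSeg x n)).length := by
  refine StrictMono.le_apply (f := fun n => (h (initSeg x n)).length)
    (strictMono_nat_of_lt_succ fun n => ?_)
  rw [initSeg_succ]
  have hprefix := hh.prefix_append (initSeg x n) (x n)
  exact hprefix.length_le.lt_of_ne fun hlen => hh.ne_append _ _ (hprefix.eq_of_length hlen)

theorem isPerfectEmbedding_foldl {T : Set (List Bool)} (root : T) {e : T → Bool → T} {L : ℕ → ℕ}
    (length_e : ∀ (s : T) l, (e s l : List Bool).length = L (s : List Bool).length)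
    (prefix_e : ∀ (s : T) l, (s : List Bool) <+: e s l) (ne_e : ∀ (s : T) l, s ≠ e s l)
    (split_e : ∀ s : T, e s false ≠ e s true) :
    IsPerfectEmbedding fun η => (η.foldl e root).1 where
  length_eq := by
    have length_foldl (η : List Bool) :
        (η.foldl e root).1.length = L^[η.length] (root : List Bool).length := by
      induction η using List.reverseRecOn with
      | nil => rfl
      | append_singleton η l ih =>
        rw [List.foldl_concat, length_e, ih, List.length_append, List.length_singleton,
          Function.iterate_succ_apply']
    intro η η' hlen
    rw [length_foldl, length_foldl, hlen]
  prefix_append η l := by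
    rw [List.foldl_concat]
    exact prefix_e _ l
  ne_append η l := by
    rw [List.foldl_concat]
    exact Subtype.coe_ne_coe.2 (ne_e _ l)
  append_false_ne_append_true η := by
    rw [List.foldl_concat, List.foldl_concat]
    exact Subtype.coe_ne_coe.2 (split_e _)

variable {W : Set (ℕ → Bool)}

theorem eventually_exists_split_of_preperfect (hW : Preperfect W) {Q : List Bool → Prop}
    (hQ : ∀ x ∈ W, ∀ᶠ n in atTop, Q (initSeg x n)) (s : nodes W) :
    ∀ᶠ n in atTop, ∃ e : Bool → nodes W, e false ≠ e true ∧
      ∀ l, (e l : List Bool).length = n ∧ (s : List Bool) <+: e l ∧ s ≠ e l ∧ Q (e l) := by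
  obtain ⟨_, x, hx, k, rfl⟩ := s
  obtain ⟨y, hy, hne, hyx⟩ := exists_ne_initSeg_eq_of_preperfect hW hx k
  filter_upwards [eventually_gt_atTop k, eventually_initSeg_ne hne, hQ x hx, hQ y hy]
    with n hkn hsplit hQx hQy
  have ne_of_length {t : nodes W} (ht : (t : List Bool).length = n) :
      (⟨initSeg x k, initSeg_mem_nodes hx k⟩ : nodes W) ≠ t := by
    rintro rfl
    simp [hkn.ne] at ht
  refine ⟨fun l => cond l ⟨initSeg x n, initSeg_mem_nodes hx n⟩
    ⟨initSeg y n, initSeg_mem_nodes hy n⟩, Subtype.coe_ne_coe.1 hsplit, ?_⟩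
  rintro (_ | _)
  · exact ⟨length_initSeg y n, hyx ▸ initSeg_prefix y hkn.le, ne_of_length (length_initSeg y n),
      hQy⟩
  · exact ⟨length_initSeg x n, initSeg_prefix x hkn.le, ne_of_length (length_initSeg x n), hQx⟩

theorem exists_isPerfectEmbedding_of_preperfect (hW : Preperfect W) (hne : W.Nonempty)
    {Q : List Bool → List Bool → Prop} (hQ : ∀ s, ∀ x ∈ W, ∀ᶠ n in atTop, Q s (initSeg x n)) :
    ∃ h, IsPerfectEmbedding h ∧ (∀ η, h η ∈ nodes W) ∧ ∀ η l, Q (h η) (h (η ++ [l])) := by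
  have finite_level (k : ℕ) : ((fun s : nodes W => (s : List Bool).length) ⁻¹' {k}).Finite :=
    (List.finite_length_eq Bool k).preimage (f := Subtype.val) Subtype.val_injective.injOn
  obtain ⟨L, hL⟩ := exists_forall_comp_of_finite_fibers finite_level
    fun s => eventually_exists_split_of_preperfect hW (hQ s) s
  choose e split_e he using hL
  obtain ⟨x₀, hx₀⟩ := hne
  let root : nodes W := ⟨initSeg x₀ 0, initSeg_mem_nodes hx₀ 0⟩
  refine ⟨fun η => (η.foldl e root).1, isPerfectEmbedding_foldl root
    (fun s l => (he s l).1) (fun s l => (he s l).2.1) (fun s l => (he s l).2.2.1) split_e,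
    fun η => (η.foldl e root).2, fun η l => ?_⟩
  simpa only [List.foldl_concat] using (he (η.foldl e root) l).2.2.2

end PerfectEmbedding

section BranchSup

universe u

/-- The supremum `f x` of the ordinals assigned to the initial segments of the branch `x`. -/
noncomputable def branchSup {α : Type*} (ia : List α → Ordinal) (x : ℕ → α) : Ordinal :=
  ⨆ n, ia (initSeg x n)

variable {α : Type*}

theorem isLUB_branchSup (ia : List α → Ordinal) (x : ℕ → α) :
    IsLUB (range fun n => ia (initSeg x n)) (branchSup ia x) :=
  isLUB_ciSup Ordinal.bddAbove_of_small

theorem branchSup_le_iSup [Small.{u} (List α)] (ia : List α → Ordinal.{u}) (x : ℕ → α) :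
    branchSup ia x ≤ ⨆ η, ia η :=
  Ordinal.iSup_le fun n => Ordinal.le_iSup ia (initSeg x n)

theorem countable_range_branchSup [Countable α] (ia : List α → Ordinal) :
    (range (branchSup ia)).Countable := by
  refine (countable_setOf_exists_subset_isLUB (countable_range ia)).mono ?_
  rintro _ ⟨x, rfl⟩
  exact ⟨_, range_comp_subset_range (initSeg x) ia, isLUB_branchSup ia x⟩

theorem eventually_le_of_branchSup_le {ia : List α → Ordinal}
    (hmono : ∀ ν η : List α, ν <+: η → ν ≠ η → ia ν < ia η) {x y : ℕ → α}
    (hxy : branchSup ia x ≤ branchSup ia y) (m : ℕ) :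
    ∀ᶠ n in atTop, ia (initSeg x m) ≤ ia (initSeg y n) := by
  have hlt : ia (initSeg x m) < branchSup ia y :=
    (strictMono_comp_initSeg hmono x m.lt_succ_self).trans_le
      (((isLUB_branchSup ia x).1 (mem_range_self (m + 1))).trans hxy)
  obtain ⟨n₀, hn₀⟩ := Ordinal.lt_iSup_iff.1 hlt
  filter_upwards [eventually_ge_atTop n₀] with n hn
  exact hn₀.le.trans ((strictMono_comp_initSeg hmono y).monotone hn)

end BranchSup

theorem perfect_subtree_constant_sup_general (ia : List Bool → Ordinal)
    (hmono : ∀ ν η : List Bool, ν <+: η → ν ≠ η → ia ν < ia η) :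
    ∃ (δ : Ordinal) (h : List Bool → List Bool),
      δ ≤ ⨆ η, ia η ∧ Order.IsSuccLimit δ ∧ IsPerfectEmbedding h ∧
      ∀ x : ℕ → Bool, branchSup (ia ∘ h) x = δ := by
  have : Uncountable (ℕ → Bool) := by
    rw [← aleph0_lt_mk_iff]
    simpa using cantor ℵ₀
  obtain ⟨δ, hδ⟩ := exists_not_countable_fiber (countable_range_branchSup ia)
  obtain ⟨W, hWδ, ⟨x₀, hx₀⟩, hW⟩ := exists_nonempty_preperfect_subset hδ
  obtain rfl : branchSup ia x₀ = δ := hWδ hx₀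
  obtain ⟨h, hh, hnodes, hle⟩ :=
    exists_isPerfectEmbedding_of_preperfect (Q := fun s t => ia (initSeg x₀ s.length) ≤ ia t)
      hW ⟨x₀, hx₀⟩ fun s y hy => eventually_le_of_branchSup_le hmono (hWδ hy).ge s.length
  refine ⟨_, h, branchSup_le_iSup ia x₀, isSuccLimit_of_isLUB_range_of_strictMono
    (strictMono_comp_initSeg hmono x₀) (isLUB_branchSup ia x₀), hh, fun x => le_antisymm ?_ ?_⟩
  · refine Ordinal.iSup_le fun n => ?_
    obtain ⟨y, hy, k, hk⟩ := hnodes (initSeg x n)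
    calc ia (h (initSeg x n)) = ia (initSeg y k) := by rw [hk]
      _ ≤ branchSup ia y := (isLUB_branchSup ia y).1 (mem_range_self k)
      _ = branchSup ia x₀ := hWδ hy
  · refine Ordinal.iSup_le fun n => ?_
    calc ia (initSeg x₀ n) ≤ ia (initSeg x₀ (h (initSeg x n)).length) :=
          (strictMono_comp_initSeg hmono x₀).monotone (hh.le_length_initSeg x n)
      _ ≤ ia (h (initSeg x (n + 1))) := by simpa only [initSeg_succ] using hle (initSeg x n) (x n)
      _ ≤ branchSup (ia ∘ h) x := (isLUB_branchSup (ia ∘ h) x).1 (mem_range_self (n + 1))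

/-- Given countable ordinals `i_η` indexed by finite binary
sequences, strictly increasing along proper end-extension, there are a countable
limit ordinal `δ` and an embedding `h` of `2^{<ω}` into itself (level-preserving,
strictly extension-increasing, splitting) such that along every branch `x` the
supremum of the assigned ordinals is exactly `δ`. -/
theorem perfect_subtree_constant_sup (ia : List Bool → Ordinal)
    (hlt : ∀ η : List Bool, ia η < (aleph 1).ord)
    (hmono : ∀ ν η : List Bool, ν <+: η → ν ≠ η → ia ν < ia η) :
    ∃ (δ : Ordinal) (h : List Bool → List Bool),
      δ < (aleph 1).ord ∧ Order.IsSuccLimit δ ∧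
      (∀ (m : ℕ) (η η' : List Bool), η.length = m → η'.length = m →
        (h η).length = (h η').length) ∧
      (∀ (η : List Bool) (l : Bool), h η <+: h (η ++ [l]) ∧ h η ≠ h (η ++ [l])) ∧
      (∀ η : List Bool, h (η ++ [false]) ≠ h (η ++ [true])) ∧
      (∀ x : ℕ → Bool, (⨆ n : ℕ, ia (h (List.ofFn fun k : Fin n => x k))) = δ) := by
  obtain ⟨δ, h, hδ, hlim, hh, hsup⟩ := perfect_subtree_constant_sup_general ia hmono
  have hbound : ⨆ η, ia η < (aleph 1).ord := by
    simpa using Ordinal.iSup_lt_omega_one (f := ia) (by simpa using hlt)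
  exact ⟨δ, h, hδ.trans_lt hbound, hlim, fun _ _ _ hη hη' => hh.length_eq (hη.trans hη'.symm),
    fun η l => ⟨hh.prefix_append η l, hh.ne_append η l⟩, hh.append_false_ne_append_true, hsup⟩
end

section
/- Assume cf(2^ℵ₀) = ℵ₁. Let Q be a separative, atomless, countably closed partial order with |Q| ≤ 2^ℵ₀. Then there exists a family ⟨I_i : i < ω₁⟩ of maximal antichains of Q whose union ⋃_{i<ω₁} I_i is a dense subset of Q. -/
open Cardinal

/-- A subset `D` is dense if every element has an element of `D` below it. -/
def IsDenseSub {Q : Type} [PartialOrder Q] (D : Set Q) : Prop := ∀ p : Q, ∃ q ∈ D, q ≤ p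

/-- A maximal antichain: pairwise incompatible, and every element of `Q` is
compatible with some member. -/
def IsMaximalAntichain {Q : Type} [PartialOrder Q] (A : Set Q) : Prop :=
  (A.Pairwise fun p q => Incompat p q) ∧ ∀ p : Q, ∃ a ∈ A, ¬ Incompat p a

/-!
Below every element of a countably closed atomless order grows a binary tree, whose branches have
pairwise incompatible lower bounds: an antichain `A p` of size `2^ℵ₀` below `p`. Hence fewer than
`2^ℵ₀` elements `p a` have a pairwise incompatible refinement. Running through them in a well-order,
retain `p a` if it is compatible with at most `μ < 2^ℵ₀` members of `A (p b)` for every `b < a`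
already retained, where `μ` is infinite and bounds the number of the `p a`. Every `p a` is then
compatible with more than `μ` members of `A (p b)` for some retained `b`, and can be refined inside
one of them that is chosen for no other index and is incompatible with all `p c`, `c > b` retained,
because these exclude at most `μ` members altogether. Finally, `Q` is a union of `cf (2^ℵ₀)` sets of
size less than `2^ℵ₀`; refine each of them and extend the result to a maximal antichain.
-/

open Function

universe u v

section Cardinals

theorem exists_kernel_of_wellFounded {α : Type*} {r : α → α → Prop} (hr : WellFounded r) :
    ∃ K : Set α, ∀ a, a ∈ K ↔ ∀ b ∈ K, ¬ r b a := by
  refine ⟨{a | hr.fix (fun a mem ↦ ∀ b, (hb : r b a) → ¬ mem b hb) a}, fun a ↦ ?_⟩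
  rw [Set.mem_ofPred_eq, hr.fix_eq]
  exact ⟨fun h b hbK hba ↦ h b hba hbK, fun h b hba hbK ↦ h b hbK hba⟩

theorem exists_injective_forall_mem {ι X : Type u} (B : ι → Set X) (hB : ∀ i, #ι ≤ #(B i)) :
    ∃ f : ι → X, Injective f ∧ ∀ i, f i ∈ B i := by
  obtain ⟨_, _, hord⟩ := exists_ord_eq_type_lt ι
  have exists_fresh (i : ι) (g : ∀ j, j < i → X) : ∃ x ∈ B i, ∀ j hj, g j hj ≠ x := by
    let used : Set X := Set.range fun j : Set.Iio i ↦ g j.1 j.2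
    have used_lt : #used < #(B i) := (mk_range_le.trans_lt (mk_Iio_lt i hord)).trans_le (hB i)
    obtain ⟨x, hxB, hx⟩ := Set.not_subset.1 fun h ↦ (mk_le_mk_of_subset h).not_gt used_lt
    exact ⟨x, hxB, fun j hj hjx ↦ hx ⟨⟨j, hj⟩, hjx⟩⟩
  choose next next_mem next_fresh using exists_fresh
  let f : ι → X := (wellFounded_lt (α := ι)).fix next
  have f_eq (i : ι) : f i = next i fun j _ ↦ f j := WellFounded.fix_eq _ _ _
  refine ⟨f, Injective.of_lt_imp_ne fun j i hji ↦ ?_, fun i ↦ ?_⟩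
  · rw [f_eq i]
    exact next_fresh i (fun j _ ↦ f j) j hji
  · rw [f_eq i]
    exact next_mem i _

theorem lt_mk_sdiff {X : Type u} {S T : Set X} {μ : Cardinal.{u}} (hμ : ℵ₀ ≤ μ)
    (hS : μ < #S) (hT : #T ≤ μ) : μ < #(S \ T : Set X) := by
  by_contra! hdiff
  exact hS.not_ge <| (le_mk_sdiff_add_mk S T).trans <|
    (add_le_add hdiff hT).trans (add_eq_self hμ).le

theorem exists_iUnion_eq_univ_of_cof_le {Q : Type u} {ι : Type v} {κ : Cardinal.{u}}
    (hκ : ℵ₀ ≤ κ) (hQ : #Q ≤ κ) (hι : lift.{v} κ.ord.cof ≤ lift.{u} #ι) :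
    ∃ S : ι → Set Q, (∀ i, #(S i) < κ) ∧ ⋃ i, S i = Set.univ := by
  have : NoMaxOrder κ.ord.ToType := noMaxOrder hκ
  obtain ⟨C, hC, hC_card⟩ := Order.exists_cof_eq κ.ord.ToType
  obtain ⟨g⟩ : Nonempty (Q ↪ κ.ord.ToType) := by rwa [← Cardinal.le_def, mk_ord_toType]
  obtain ⟨e⟩ : Nonempty (C ↪ ι) := by rwa [← lift_mk_le', hC_card, Ordinal.cof_toType]
  have : Nonempty κ.ord.ToType := by
    rw [← mk_ne_zero_iff, mk_ord_toType]
    exact (aleph0_pos.trans_le hκ).ne'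
  have : Nonempty C := hC.nonempty.to_subtype
  obtain ⟨c, hc⟩ : ∃ c : ι → C, Surjective c := ⟨_, invFun_surjective e.injective⟩
  refine ⟨fun i ↦ g ⁻¹' Set.Iio (c i), fun i ↦ ?_, ?_⟩
  · refine (mk_preimage_of_injective _ _ g.injective).trans_lt ?_
    simpa only [mk_ord_toType] using mk_Iio_lt (c i : κ.ord.ToType) (by simp)
  · rw [← Set.preimage_iUnion, hc.iUnion_comp fun x : C ↦ Set.Iio (x : κ.ord.ToType),
      Set.iUnion_coe_set, isCofinal_iff_iUnion_Iio_eq_univ.1 hC, Set.preimage_univ]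

end Cardinals

section Antichains

variable {Q : Type} [PartialOrder Q]

instance : Std.Symm (Incompat (Q := Q)) where
  symm _ _ h := fun ⟨r, hq, hp⟩ ↦ h ⟨r, hp, hq⟩

theorem Incompat.mono {p q p' q' : Q} (h : Incompat p q) (hp : p' ≤ p) (hq : q' ≤ q) :
    Incompat p' q' :=
  fun ⟨r, hrp, hrq⟩ ↦ h ⟨r, hrp.trans hp, hrq.trans hq⟩

theorem exists_isMaximalAntichain_superset {S : Set Q} (hS : S.Pairwise Incompat) :
    ∃ M, S ⊆ M ∧ IsMaximalAntichain M := by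
  obtain ⟨M, hSM, hM⟩ := zorn_subset_nonempty {T : Set Q | T.Pairwise Incompat}
    (fun c hc hchain _ ↦ ⟨⋃₀ c, (Set.pairwise_sUnion hchain.directedOn).2 hc,
      fun _ ↦ Set.subset_sUnion_of_mem⟩) S hS
  refine ⟨M, hSM, hM.prop, fun p ↦ ?_⟩
  by_contra! hp
  have hinsert : (insert p M).Pairwise Incompat :=
    hM.prop.insert_of_symm fun q hq _ ↦ hp q hq
  have hpM : p ∈ M := hM.le_of_ge hinsert (Set.subset_insert _ _) (Set.mem_insert _ _)
  exact hp p hpM ⟨p, le_rfl, le_rfl⟩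

/-- There is an antichain below `p` indexed by `X`. The indexing is injective, since every element
is compatible with itself, so this says that the antichain has cardinality `#X`. -/
def HasAntichainBelow (X : Type*) (p : Q) : Prop :=
  ∃ A : X → Q, (∀ x, A x ≤ p) ∧ Pairwise (Incompat on A)

theorem hasAntichainBelow_nat_pi {X : Type*}
    (hsplit : ∀ p : Q, HasAntichainBelow X p)
    (hclosed : ∀ f : ℕ → Q, (∀ n, f (n + 1) ≤ f n) → ∃ q, ∀ n, q ≤ f n) (p : Q) :
    HasAntichainBelow (ℕ → X) p := by
  choose child child_le child_incompat using hsplit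
  let node (l : List X) : Q := l.foldr (fun x q ↦ child q x) p
  choose A hA using fun x : ℕ → X ↦
    hclosed (fun n ↦ node (PiNat.res x n)) fun n ↦ child_le _ (x n)
  refine ⟨A, fun x ↦ hA x 0, fun x y hxy ↦ ?_⟩
  let n := PiNat.firstDiff x y
  have hres : PiNat.res x n = PiNat.res y n :=
    PiNat.res_eq_res.2 fun _ ↦ PiNat.apply_eq_of_lt_firstDiff
  have hx : A x ≤ child (node (PiNat.res x n)) (x n) := hA x (n + 1)
  have hy : A y ≤ child (node (PiNat.res x n)) (y n) := hres ▸ hA y (n + 1)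
  exact (child_incompat _ (PiNat.apply_firstDiff_ne hxy)).mono hx hy

/-- The trace of `q` on the family `A`: the indices of the members of `A` compatible with `q`. -/
def compatIndices {X : Type*} (A : X → Q) (q : Q) : Set X := {x | ¬ Incompat (A x) q}

theorem compatIndices_eq_univ {X : Type*} {A : X → Q} {q : Q} (hA : ∀ x, A x ≤ q) :
    compatIndices A q = Set.univ :=
  Set.eq_univ_of_forall fun x h ↦ h ⟨A x, le_rfl, hA x⟩

theorem exists_sparse_index_set {ι X : Type*} [LinearOrder ι] [WellFoundedLT ι]
    {p : ι → Q} {A : ι → X → Q} (hA : ∀ i x, A i x ≤ p i) {μ : Cardinal} (hμ : μ < #X) :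
    ∃ K : Set ι, (∀ b ∈ K, ∀ c ∈ K, b < c → #(compatIndices (A b) (p c)) ≤ μ) ∧
      ∀ a, ∃ b ∈ K, μ < #(compatIndices (A b) (p a)) := by
  obtain ⟨K, hK⟩ := exists_kernel_of_wellFounded
    (r := fun b a : ι ↦ b < a ∧ μ < #(compatIndices (A b) (p a)))
    (Subrelation.wf (fun h ↦ h.1) wellFounded_lt)
  refine ⟨K, fun b hb c hc hbc ↦ not_lt.1 fun h ↦ (hK c).1 hc b hb ⟨hbc, h⟩, fun a ↦ ?_⟩
  by_cases ha : a ∈ K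
  · exact ⟨a, ha, by rwa [compatIndices_eq_univ (hA a), mk_univ]⟩
  · rw [hK a] at ha
    push Not at ha
    obtain ⟨b, hb, -, hba⟩ := ha
    exact ⟨b, hb, hba⟩

theorem exists_incompat_refinement {ι X : Type} {μ : Cardinal} (hμ : ℵ₀ ≤ μ) (hι : #ι ≤ μ)
    (hX : μ < #X) {p : ι → Q} {A : ι → X → Q} (hA : ∀ i x, A i x ≤ p i)
    (hA_incompat : ∀ i, Pairwise (Incompat on A i)) :
    ∃ r : ι → Q, (∀ i, r i ≤ p i) ∧ Pairwise (Incompat on r) := by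
  obtain ⟨_, _⟩ := exists_wellFoundedLT ι
  obtain ⟨K, hK_sparse, hK_large⟩ := exists_sparse_index_set hA hX
  choose f hfK hf_large using hK_large
  let later (b : ι) : Set X := ⋃ c ∈ {c ∈ K | b < c}, compatIndices (A b) (p c)
  have later_le (b : ι) (hb : b ∈ K) : #(later b) ≤ μ :=
    (mk_biUnion_le _ _).trans <| mul_le_of_le hμ ((mk_set_le _).trans hι) <|
      ciSup_le' fun c ↦ hK_sparse b hb c c.2.1 c.2.2
  obtain ⟨h, h_inj, h_mem⟩ := exists_injective_forall_mem
    (fun a ↦ compatIndices (A (f a)) (p a) \ later (f a))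
    fun a ↦ hι.trans (lt_mk_sdiff hμ (hf_large a) (later_le _ (hfK a))).le
  choose r r_le_A r_le_p using fun a ↦ not_not.1 (h_mem a).1
  have incompat_of_lt {a b : ι} (hab : f a < f b) : Incompat (r a) (r b) := by
    have hA_p : Incompat (A (f a) (h a)) (p (f b)) := by
      by_contra hcompat
      exact (h_mem a).2 (Set.mem_biUnion ⟨hfK b, hab⟩ hcompat)
    exact hA_p.mono (r_le_A a) ((r_le_A b).trans (hA _ _))
  refine ⟨r, r_le_p, fun a b hab ↦ ?_⟩
  rcases lt_trichotomy (f a) (f b) with hlt | heq | hgt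
  · exact incompat_of_lt hlt
  · exact (hA_incompat (f a) (h_inj.ne hab)).mono (r_le_A a) (heq ▸ r_le_A b)
  · exact symm (incompat_of_lt hgt)

theorem exists_isMaximalAntichain_refining {X : Type} (hX : ℵ₀ < #X)
    (hsplit : ∀ p : Q, HasAntichainBelow X p)
    {S : Set Q} (hS : #S < #X) : ∃ M, IsMaximalAntichain M ∧ ∀ p ∈ S, ∃ q ∈ M, q ≤ p := by
  choose A hA hA_incompat using hsplit
  obtain ⟨r, r_le, r_incompat⟩ := exists_incompat_refinement (le_max_left ℵ₀ #S)
    (le_max_right _ _) (max_lt hX hS) (p := fun s : S ↦ (s : Q)) (fun s ↦ hA s)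
    fun s ↦ hA_incompat s
  obtain ⟨M, hrM, hM⟩ := exists_isMaximalAntichain_superset r_incompat.range_pairwise
  exact ⟨M, hM, fun p hp ↦ ⟨r ⟨p, hp⟩, hrM ⟨_, rfl⟩, r_le _⟩⟩

theorem exists_isMaximalAntichain_isDenseSub_iUnion {X : Type} {ι : Type v} (hX : ℵ₀ < #X)
    (hsplit : ∀ p : Q, HasAntichainBelow X p)
    (hQ : #Q ≤ #X) (hι : lift.{v} (#X).ord.cof ≤ #ι) :
    ∃ I : ι → Set Q, (∀ i, IsMaximalAntichain (I i)) ∧ IsDenseSub (⋃ i, I i) := by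
  obtain ⟨S, hS_lt, hS_cover⟩ := exists_iUnion_eq_univ_of_cof_le (ι := ι) hX.le hQ
    (by rwa [lift_uzero])
  choose I hI hI_refines using fun i ↦ exists_isMaximalAntichain_refining hX hsplit (hS_lt i)
  refine ⟨I, hI, fun p ↦ ?_⟩
  obtain ⟨i, hpi⟩ := Set.iUnion_eq_univ_iff.1 hS_cover p
  obtain ⟨q, hqI, hqp⟩ := hI_refines i p hpi
  exact ⟨q, Set.mem_iUnion_of_mem i hqI, hqp⟩

theorem dense_union_of_omega1_antichains_general {ι : Type v}
    (hι : lift.{v} ((2 : Cardinal.{u}) ^ ℵ₀).ord.cof ≤ lift.{u} #ι)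
    (hatomless : ∀ p : Q, ∃ q r, q ≤ p ∧ r ≤ p ∧ Incompat q r)
    (hclosed : ∀ f : ℕ → Q, (∀ n, f (n + 1) ≤ f n) → ∃ q, ∀ n, q ≤ f n)
    (hsize : #Q ≤ 2 ^ ℵ₀) :
    ∃ I : ι → Set Q, (∀ i, IsMaximalAntichain (I i)) ∧ IsDenseSub (⋃ i, I i) := by
  have hcantor : #(ℕ → Bool) = 𝔠 := by simp
  have hsplit (p : Q) : HasAntichainBelow Bool p := by
    obtain ⟨q, r, hq, hr, hqr⟩ := hatomless p
    exact ⟨fun b ↦ cond b q r, Bool.forall_bool.2 ⟨hr, hq⟩, pairwise_on_bool.2 hqr⟩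
  have hcof : lift.{v} (𝔠 : Cardinal.{0}).ord.cof ≤ #ι := by
    rw [← lift_le.{u}]
    simpa only [two_power_aleph0, Ordinal.lift_cof, lift_ord, lift_lift, lift_continuum] using hι
  exact exists_isMaximalAntichain_isDenseSub_iUnion (hcantor ▸ aleph0_lt_continuum)
    (hasAntichainBelow_nat_pi hsplit hclosed) (hcantor ▸ hsize) (hcantor ▸ hcof)

end Antichains

/-- Lemma 2.5.  Assume `cf(2^ℵ₀) = ℵ₁`.  If `Q` is a
separative, atomless, countably closed partial order of size `≤ 2^ℵ₀`, then
there is a family `⟨I_i : i < ω₁⟩` of maximal antichains of `Q` whose union is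
dense in `Q`. -/
theorem dense_union_of_omega1_antichains (Q : Type) [PartialOrder Q]
    (hcf : ((2 : Cardinal) ^ aleph0).ord.cof = aleph 1)
    (hsep : ∀ p q : Q, ¬ q ≤ p → ∃ r, r ≤ q ∧ Incompat r p)
    (hatomless : ∀ p : Q, ∃ q r, q ≤ p ∧ r ≤ p ∧ Incompat q r)
    (hclosed : ∀ f : ℕ → Q, (∀ n, f (n + 1) ≤ f n) → ∃ q, ∀ n, q ≤ f n)
    (hsize : #Q ≤ 2 ^ aleph0) :
    ∃ I : (aleph 1).ord.ToType → Set Q,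
      (∀ i, IsMaximalAntichain (I i)) ∧ IsDenseSub (⋃ i, I i) := by
  exact dense_union_of_omega1_antichains_general (by rw [hcf]; simp) hatomless hclosed hsize
end

section
/- Let κ be a regular uncountable cardinal, T a tree of height κ, and ⟨b_α : α < κ⟩ an injective enumeration of all cofinal branches of T. For each α < κ let s_α be the <_T-least element of b_α \ ⋃_{β<α} b_β, and let T* = {t ∈ T : there is no α < κ with s_α <_T t and t ∈ b_α}. Then T* contains no cofinal branch; that is, there is no chain in T* containing elements of arbitrarily large height below κ. -/
open Cardinal

/-- A partial order is a tree order if the set of strict predecessors of every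
element is well-ordered by the induced order. -/
def IsTreeOrder (T : Type) [PartialOrder T] : Prop :=
  ∀ t : T, IsWellOrder {s : T // s < t} (· < ·)

/-- The height of a node: the order type of its set of strict predecessors. -/
noncomputable def nodeHeight {T : Type} [PartialOrder T] (htree : IsTreeOrder T) (t : T) :
    Ordinal :=
  @Ordinal.type {s : T // s < t} (· < ·) (htree t)

/-- `T` has height `κ`: every node has height `< κ`, and every ordinal `< κ` is
the height of some node. -/
def HasTreeHeight {T : Type} [PartialOrder T] (htree : IsTreeOrder T) (κ : Cardinal) : Prop :=
  (∀ t : T, nodeHeight htree t < κ.ord) ∧ ∀ o < κ.ord, ∃ t : T, nodeHeight htree t = o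

/-- A cofinal branch: a downward-closed maximal chain containing nodes of
arbitrarily large height below `κ`. -/
def IsCofBranch {T : Type} [PartialOrder T] (htree : IsTreeOrder T) (κ : Cardinal)
    (b : Set T) : Prop :=
  IsMaxChain (· ≤ ·) b ∧ (∀ x ∈ b, ∀ y, y ≤ x → y ∈ b) ∧
    ∀ o < κ.ord, ∃ x ∈ b, o ≤ nodeHeight htree x

/-!
In a tree the downward closure `b` of a chain `c` with nodes of arbitrarily large height below `κ`
is again a chain, and it is a maximal one because no node lies above all of `c`. So `b` is a
cofinal branch `b_α`. As `s_α` does not bound `c`, some `x ∈ c ⊆ b_α` has `s_α < x`; this `x` was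
removed from `T*`.
-/

section Preorder

variable {α : Type*} [Preorder α] {a : α} {b c : Set α}

theorem exists_mem_gt_of_isChain_of_not_bddAbove (hb : IsChain (· ≤ ·) b) (hcb : c ⊆ b)
    (hc : ¬ BddAbove c) (ha : a ∈ b) : ∃ x ∈ c, a < x := by
  obtain ⟨x, hxc, hxa⟩ := not_bddAbove_iff'.1 hc a
  exact ⟨x, hxc, ((hb.total ha (hcb hxc)).resolve_right hxa).lt_of_not_ge hxa⟩

theorem isMaxChain_of_isLowerSet_of_not_bddAbove (hb : IsChain (· ≤ ·) b) (hlower : IsLowerSet b)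
    (hunbdd : ¬ BddAbove b) : IsMaxChain (· ≤ ·) b := by
  refine ⟨hb, fun d hd hbd => hbd.antisymm fun a ha => ?_⟩
  obtain ⟨x, hxb, hax⟩ := exists_mem_gt_of_isChain_of_not_bddAbove hd hbd hunbdd ha
  exact hlower hax.le hxb

end Preorder

section Tree

variable {T : Type} [PartialOrder T] {htree : IsTreeOrder T} {κ : Cardinal} {b c : Set T}

theorem nodeHeight_mono (htree : IsTreeOrder T) : Monotone (nodeHeight htree) := by
  intro x y hxy
  have := htree x
  have := htree y
  have below (t : T) (htx : t < x) : t < y := htx.trans_le hxy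
  exact RelEmbedding.ordinal_type_le ⟨Subtype.impEmbedding _ _ below, Iff.rfl⟩

theorem IsTreeOrder.isChain_Iio (htree : IsTreeOrder T) (x : T) :
    IsChain (· ≤ ·) (Set.Iio x) := by
  intro a ha b hb _
  have := htree x
  rcases trichotomous_of (· < ·) (⟨a, ha⟩ : {t // t < x}) ⟨b, hb⟩ with hab | hab | hba
  · exact Or.inl (le_of_lt hab)
  · exact Or.inl (congrArg Subtype.val hab).le
  · exact Or.inr (le_of_lt hba)

theorem IsTreeOrder.isChain_Iic (htree : IsTreeOrder T) (x : T) :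
    IsChain (· ≤ ·) (Set.Iic x) := by
  rw [← Set.Iio_insert]
  exact (htree.isChain_Iio x).insert fun a ha _ => Or.inr (le_of_lt ha)

theorem IsTreeOrder.isChain_lowerClosure (htree : IsTreeOrder T) (hc : IsChain (· ≤ ·) c) :
    IsChain (· ≤ ·) (lowerClosure c : Set T) := by
  rintro a ⟨x, hx, hax⟩ b ⟨y, hy, hby⟩ hab
  rcases hc.total hx hy with hxy | hyx
  · exact htree.isChain_Iic y (hax.trans hxy) hby hab
  · exact htree.isChain_Iic x hax (hby.trans hyx) hab

/-- A set of nodes is cofinal in height if it contains nodes of arbitrarily large height below `κ`.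
This is the last clause of `IsCofBranch`, considered for arbitrary sets of nodes. -/
def IsHeightCofinal (htree : IsTreeOrder T) (κ : Cardinal) (c : Set T) : Prop :=
  ∀ o < κ.ord, ∃ x ∈ c, o ≤ nodeHeight htree x

theorem IsHeightCofinal.mono (hcb : c ⊆ b) (hc : IsHeightCofinal htree κ c) :
    IsHeightCofinal htree κ b := fun o ho =>
  let ⟨x, hxc, hox⟩ := hc o ho
  ⟨x, hcb hxc, hox⟩

theorem IsHeightCofinal.not_bddAbove (hc : IsHeightCofinal htree κ c) (hκ : ℵ₀ ≤ κ)
    (hheight : ∀ t, nodeHeight htree t < κ.ord) : ¬ BddAbove c := by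
  rintro ⟨z, hz⟩
  obtain ⟨x, hxc, hzx⟩ := hc _ ((isSuccLimit_ord hκ).succ_lt (hheight z))
  exact (Order.succ_le_iff.1 hzx).not_ge (nodeHeight_mono htree (hz hxc))

theorem IsHeightCofinal.isCofBranch_lowerClosure (hc : IsHeightCofinal htree κ c)
    (hchain : IsChain (· ≤ ·) c) (hunbdd : ¬ BddAbove c) :
    IsCofBranch htree κ (lowerClosure c : Set T) := by
  have hlower : IsLowerSet (lowerClosure c : Set T) := (lowerClosure c).lower
  have hmax : IsMaxChain (· ≤ ·) (lowerClosure c : Set T) :=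
    isMaxChain_of_isLowerSet_of_not_bddAbove (htree.isChain_lowerClosure hchain) hlower
      (bddAbove_lowerClosure.not.2 hunbdd)
  exact ⟨hmax, fun _ hx _ hyx => hlower hyx hx, hc.mono subset_lowerClosure⟩

theorem starred_tree_has_no_cofinal_branch_general (hκ : ℵ₀ ≤ κ)
    (hheight : ∀ t, nodeHeight htree t < κ.ord) {ι : Sort*} (b : ι → Set T)
    (hall : ∀ c : Set T, IsCofBranch htree κ c → ∃ i, b i = c)
    (s : ι → T) (hs : ∀ i, s i ∈ b i) :
    ¬ ∃ c : Set T, c ⊆ {t : T | ¬ ∃ i, s i < t ∧ t ∈ b i} ∧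
        IsChain (· ≤ ·) c ∧ IsHeightCofinal htree κ c := by
  rintro ⟨c, hstar, hchain, hcof⟩
  have hunbdd : ¬ BddAbove c := hcof.not_bddAbove hκ hheight
  obtain ⟨i, hi⟩ := hall _ (hcof.isCofBranch_lowerClosure hchain hunbdd)
  have hbranch : IsChain (· ≤ ·) (b i) := hi ▸ htree.isChain_lowerClosure hchain
  have hsub : c ⊆ b i := hi ▸ subset_lowerClosure
  obtain ⟨x, hxc, hsx⟩ := exists_mem_gt_of_isChain_of_not_bddAbove hbranch hsub hunbdd (hs i)
  exact hstar hxc ⟨i, hsx, hsub hxc⟩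

end Tree

/-- Lemma 4.2(a).  Let `⟨b_α : α < κ⟩` injectively enumerate
all cofinal branches of a tree `T` of height `κ` (κ regular uncountable), let
`s_α` be the `<`-least element of `b_α \ ⋃_{β<α} b_β`, and let
`T* = {t : ¬∃ α, s_α < t ∈ b_α}`.  Then `T*` contains no chain with elements of
arbitrarily large height below `κ`. -/
theorem starred_tree_has_no_cofinal_branch (T : Type) [PartialOrder T]
    (htree : IsTreeOrder T) (κ : Cardinal)
    (hreg : κ.IsRegular) (hunc : aleph0 < κ)
    (hht : HasTreeHeight htree κ)
    (bseq : κ.ord.ToType → Set T)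
    (hinj : Function.Injective bseq)
    (hbr : ∀ α, IsCofBranch htree κ (bseq α))
    (hall : ∀ c : Set T, IsCofBranch htree κ c → ∃ α, bseq α = c)
    (s : κ.ord.ToType → T)
    (hs₁ : ∀ α, s α ∈ bseq α)
    (hs₂ : ∀ α, ∀ β < α, s α ∉ bseq β)
    (hs₃ : ∀ α, ∀ y ∈ bseq α, (∀ β < α, y ∉ bseq β) → s α ≤ y) :
    ¬ ∃ c : Set T, c ⊆ {t : T | ¬ ∃ α, s α < t ∧ t ∈ bseq α} ∧
        IsChain (· ≤ ·) c ∧ ∀ o < κ.ord, ∃ x ∈ c, o ≤ nodeHeight htree x :=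
  starred_tree_has_no_cofinal_branch_general hreg.aleph0_le hht.1 bseq hall s hs₁
end

section
/- Let κ be a regular uncountable cardinal, T a tree of height κ in which every element has exactly κ-many immediate successors, and ⟨b_α : α < κ⟩ an injective enumeration of all cofinal branches of T. For each α < κ let s_α be the <_T-least element of b_α \ ⋃_{β<α} b_β, and let T* = {t ∈ T : there is no α < κ with s_α <_T t and t ∈ b_α}. Then T* is dense in T with respect to the reversed tree order: for every t ∈ T there exists t′ ∈ T* with t ≤_T t′. -/
open Cardinal

/-!
Suppose `t ∉ T*`, so `s_α < t ∈ b_α` for some `α`. Let `u` be minimal among the nodes above `t`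
that lie off `b_α`; such nodes exist because `b_α` is a chain while `t` has incomparable extensions.
Then `u ∈ T*`. Indeed, if `s_β < u ∈ b_β`, then `s_α < t ≤ u` puts `s_α` in `b_β`, so `α ≤ β`; and
`s_β` is comparable with `t` along `b_β`, hence lies in `b_α` by the minimality of `u`, so `β ≤ α`.
Thus `α = β` and `u ∈ b_α`, a contradiction.
-/

lemma IsTreeOrder.wellFoundedLT {T : Type} [PartialOrder T] (htree : IsTreeOrder T) :
    WellFoundedLT T :=
  ⟨wellFounded_iff_wellFounded_subrel.2 fun t => (htree t).wf⟩

lemma not_le_of_lt_of_forall_lt_le {T : Type*} [PartialOrder T] {t u v : T}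
    (htu : t < u) (hv : ∀ w < v, w ≤ t) (huv : u ≠ v) : ¬ u ≤ v := fun h =>
  htu.not_ge (hv u (h.lt_of_ne huv))

lemma exists_incompRel_of_one_lt_mk_immediate_successors {T : Type*} [PartialOrder T] {t : T}
    (h : 1 < #{t' : T | t < t' ∧ ∀ w : T, w < t' ↔ w ≤ t}) :
    ∃ u v, t ≤ u ∧ t ≤ v ∧ IncompRel (· ≤ ·) u v := by
  obtain ⟨⟨u, htu, hu⟩, ⟨v, htv, hv⟩, huv⟩ := (one_lt_iff_nontrivial.1 h).exists_pair_ne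
  have hne : u ≠ v := fun heq => huv (Subtype.ext heq)
  exact ⟨u, v, htu.le, htv.le,
    not_le_of_lt_of_forall_lt_le htu (fun w => (hv w).1) hne,
    not_le_of_lt_of_forall_lt_le htv (fun w => (hu w).1) hne.symm⟩

/-- The set `T*` of the nodes that lie on no branch `b α` strictly above its marked node `s α`, for
any family of branches `b` with a marked node on each. -/
def starredTree {T ι : Type*} [Preorder T] (b : ι → Set T) (s : ι → T) : Set T :=
  {t | ¬ ∃ α, s α < t ∧ t ∈ b α}

section

variable {T ι : Type*} [Preorder T] [LinearOrder ι] {b : ι → Set T} {s : ι → T}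

lemma mem_starredTree_of_minimal_notMem (hchain : ∀ α, IsChain (· ≤ ·) (b α))
    (hlower : ∀ α, IsLowerSet (b α)) (hs : ∀ α, ∀ β < α, s α ∉ b β) {α : ι} {t u : T}
    (hst : s α < t) (ht : t ∈ b α) (hu : Minimal (fun w => t ≤ w ∧ w ∉ b α) u) :
    u ∈ starredTree b s := by
  rintro ⟨β, hsu, huβ⟩
  have index_le {γ δ : ι} (h : s γ ∈ b δ) : γ ≤ δ := le_of_not_gt fun hδγ => hs γ δ hδγ h
  have htβ : t ∈ b β := hlower β hu.prop.1 huβ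
  have hsα : s α ∈ b β := hlower β hst.le htβ
  have hsβ : s β ∈ b α := by
    rcases (hchain β).total (hlower β hsu.le huβ) htβ with hle | hle
    · exact hlower α hle ht
    · by_contra hmem
      exact hu.not_prop_of_lt hsu ⟨hle, hmem⟩
  obtain rfl : α = β := le_antisymm (index_le hsα) (index_le hsβ)
  exact hu.prop.2 huβ

theorem starred_tree_is_dense_general [WellFoundedLT T]
    (hsplit : ∀ t : T, ∃ u v, t ≤ u ∧ t ≤ v ∧ IncompRel (· ≤ ·) u v)
    (hchain : ∀ α, IsChain (· ≤ ·) (b α)) (hlower : ∀ α, IsLowerSet (b α))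
    (hs : ∀ α, ∀ β < α, s α ∉ b β) : IsCofinal (starredTree b s) := by
  intro t
  by_cases ht : t ∈ starredTree b s
  · exact ⟨t, ht, le_rfl⟩
  obtain ⟨α, hst, htα⟩ := not_not.1 ht
  have hoff : ∃ u, t ≤ u ∧ u ∉ b α := by
    obtain ⟨u, v, htu, htv, huv, hvu⟩ := hsplit t
    by_contra! hall
    exact ((hchain α).total (hall u htu) (hall v htv)).elim huv hvu
  obtain ⟨u, hu⟩ := exists_minimal_of_wellFoundedLT _ hoff
  exact ⟨u, mem_starredTree_of_minimal_notMem hchain hlower hs hst htα hu, hu.prop.1⟩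

end

/-- Lemma 4.2(b).  Under the hypotheses of Lemma 4.2, if in
addition every node of `T` has exactly `κ`-many immediate successors, then `T*`
is dense in `T` for the reversed tree order: every `t ∈ T` has some `t' ∈ T*`
with `t ≤ t'`. -/
theorem starred_tree_is_dense (T : Type) [PartialOrder T]
    (htree : IsTreeOrder T) (κ : Cardinal)
    (hreg : κ.IsRegular) (hunc : aleph0 < κ)
    (hht : HasTreeHeight htree κ)
    (hsucc : ∀ t : T, #{t' : T | t < t' ∧ ∀ s : T, s < t' ↔ s ≤ t} = κ)
    (bseq : κ.ord.ToType → Set T)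
    (hinj : Function.Injective bseq)
    (hbr : ∀ α, IsCofBranch htree κ (bseq α))
    (hall : ∀ c : Set T, IsCofBranch htree κ c → ∃ α, bseq α = c)
    (s : κ.ord.ToType → T)
    (hs₁ : ∀ α, s α ∈ bseq α)
    (hs₂ : ∀ α, ∀ β < α, s α ∉ bseq β)
    (hs₃ : ∀ α, ∀ y ∈ bseq α, (∀ β < α, y ∉ bseq β) → s α ≤ y) :
    ∀ t : T, ∃ t' ∈ {t : T | ¬ ∃ α, s α < t ∧ t ∈ bseq α}, t ≤ t' :=
  have := htree.wellFoundedLT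
  starred_tree_is_dense_general (fun t => exists_incompRel_of_one_lt_mk_immediate_successors
    (hsucc t ▸ one_lt_aleph0.trans hunc)) (fun α => (hbr α).1.1)
    (fun α _ _ hle hx => (hbr α).2.1 _ hx _ hle) hs₂
end
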